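/- arXiv:1206.1636 — 13 statements merged into one kernel-verified Lean document; each statement's English description precedes it below -/
import Mathlib

section
/- Let φ = (1+√5)/2 be the golden ratio. The set 𝔸 equals the union of the three sets: {(ξ,ξ,ξ) : ξ ∈ ℝ}; {(−ξ, 2−ξ, ξ), (ξ, −ξ, 2−ξ), (2−ξ, ξ, −ξ) : ξ ∈ ℝ \ {−φ⁻¹, φ}}; and {(1/(1−ξ), 1 − 1/ξ, ξ), (ξ, 1/(1−ξ), 1 − 1/ξ), (1 − 1/ξ, ξ, 1/(1−ξ)) : ξ ∈ (φ, φ²)}. -/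
/-!
Write `x = a²`, `y = b²`, `z = c²`. The squared cevian lengths `u, v, w` are linear in `(x, y, z)`,
and nonnegative reals `p, q, r` are the sides of a triangle iff Heron's form
`H(p², q², r²) = 2(p²q² + q²r² + r²p²) - p⁴ - q⁴ - r⁴` is positive. So `(ρ, σ, τ) ∈ A` iff
`K = H(u, v, w)` is positive on the open cone `H(x, y, z) > 0` (`mem_A_iff`).

*Necessity.* By continuity `K ≥ 0` on the boundary of the cone, i.e. at the degenerate triangles
`(s², (s - t)², t²)`, where `u, v, w` are the squares of the linear forms
`ℓ₁ = t - ρs`, `ℓ₂ = σt + (1 - σ)s`, `ℓ₃ = s - (1 - τ)t`.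
At the zero of `ℓ₁` one has `K = -(ℓ₂² - ℓ₃²)²`, so `ℓ₂ = ± ℓ₃` there; likewise cyclically
(`boundary_eq`). Hence each zero of an `ℓᵢ` is a common zero of two of the four forms
`±ℓ₁ ± ℓ₂ ± ℓ₃` (up to sign), and in each of the eight combinations either one of these four forms
vanishes identically, giving the first two families, or the three zeros coincide
(`solve_boundary`). In the latter case `u, v, w` are proportional, `σ = 1 / (1 - ρ)`,
`τ = 1 - 1 / ρ`, and `K > 0` is a polynomial inequality in `ρ` satisfied exactly on three intervals,
which `ρ ↦ 1 / (1 - ρ)` permutes cyclically.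

*Sufficiency.* On the first two families `K` is `H(x, y, z)` times a square
(`K_diag`, `K_second`), and on the third it is a positive multiple of `u²` (`K_third`).
-/

/-- The set of side-length triples of non-degenerate triangles. -/
def T : Set (ℝ × ℝ × ℝ) :=
  {p | |p.1 - p.2.1| < p.2.2 ∧ p.2.2 < p.1 + p.2.1}

/-- The cevian length `f a b c ρ = AA_ρ`. -/
noncomputable def f (a b c ρ : ℝ) : ℝ :=
  Real.sqrt (ρ * (ρ - 1) * a ^ 2 + ρ * b ^ 2 + (1 - ρ) * c ^ 2)

/-- The set of parameter triples `(ρ, σ, τ)` for which the three cevians form a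
triangle for every triangle. -/
def A : Set (ℝ × ℝ × ℝ) :=
  {p | ∀ a b c : ℝ, (a, b, c) ∈ T →
    (f a b c p.1, f b c a p.2.1, f c a b p.2.2) ∈ T}

/-- The golden ratio. -/
noncomputable def phi : ℝ := (1 + Real.sqrt 5) / 2

namespace Ceva

/-! ### Reduction to Heron's form -/

/-- Heron's form: sixteen times the squared area of a triangle with squared sides `x, y, z`. -/
def H (x y z : ℝ) : ℝ := 2 * (x * y + y * z + z * x) - x ^ 2 - y ^ 2 - z ^ 2

/-- The squared cevian length in terms of the squared sides. -/
def U (x y z ρ : ℝ) : ℝ := ρ * (ρ - 1) * x + ρ * y + (1 - ρ) * z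

/-- Heron's form of the three squared cevians. -/
def K (ρ σ τ x y z : ℝ) : ℝ := H (U x y z ρ) (U y z x σ) (U z x y τ)

lemma mem_T_iff {p q r : ℝ} (hp : 0 ≤ p) (hq : 0 ≤ q) (hr : 0 ≤ r) :
    (p, q, r) ∈ T ↔ 0 < H (p ^ 2) (q ^ 2) (r ^ 2) := by
  have e : H (p ^ 2) (q ^ 2) (r ^ 2) =
      ((p + q + r) * (p + q - r)) * ((r - (p - q)) * (r + (p - q))) := by
    unfold H; ring
  rw [e]
  simp only [T, Set.mem_ofPred_eq, abs_lt]
  constructor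
  · rintro ⟨⟨h1, h2⟩, h3⟩
    have : 0 < p + q + r := by linarith
    have : 0 < p + q - r := by linarith
    have : 0 < r - (p - q) := by linarith
    have : 0 < r + (p - q) := by linarith
    positivity
  · intro h
    rcases pos_and_pos_or_neg_and_neg_of_mul_pos h with ⟨h1, h2⟩ | ⟨h1, h2⟩
    · have h3 : 0 < p + q - r := pos_of_mul_pos_right h1 (by positivity)
      rcases pos_and_pos_or_neg_and_neg_of_mul_pos h2 with ⟨h4, h5⟩ | ⟨h4, h5⟩
      · exact ⟨⟨by linarith, by linarith⟩, by linarith⟩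
      · linarith
    · have h3 : p + q - r < 0 := by
        by_contra! h3
        exact absurd h1 (not_lt.mpr (by positivity))
      nlinarith

lemma pos_of_mem_T {a b c : ℝ} (h : (a, b, c) ∈ T) : 0 < a ∧ 0 < b ∧ 0 < c := by
  simp only [T, Set.mem_ofPred_eq, abs_lt] at h
  obtain ⟨⟨h1, h2⟩, h3⟩ := h
  exact ⟨by linarith, by linarith, by linarith⟩

/-- Completing the square: `x · U` is a square plus a quarter of Heron's form. -/
lemma U_pos {x y z : ℝ} (hx : 0 < x) (h : 0 < H x y z) (ρ : ℝ) : 0 < U x y z ρ := by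
  have e : x * U x y z ρ = (ρ * x + (y - z - x) / 2) ^ 2 + H x y z / 4 := by
    unfold U H; ring
  refine pos_of_mul_pos_right (a := x) ?_ hx.le
  rw [e]; positivity

lemma H_rot (x y z : ℝ) : H y z x = H x y z := by unfold H; ring

lemma mem_A_iff (ρ σ τ : ℝ) : (ρ, σ, τ) ∈ A ↔
    ∀ x y z : ℝ, 0 < x → 0 < y → 0 < z → 0 < H x y z → 0 < K ρ σ τ x y z := by
  have key : ∀ a b c : ℝ, (a, b, c) ∈ T →
      ((f a b c ρ, f b c a σ, f c a b τ) ∈ T ↔ 0 < K ρ σ τ (a ^ 2) (b ^ 2) (c ^ 2)) := by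
    intro a b c h
    obtain ⟨ha, hb, hc⟩ := pos_of_mem_T h
    have hH := (mem_T_iff ha.le hb.le hc.le).1 h
    have h2 : 0 < H (b ^ 2) (c ^ 2) (a ^ 2) := by rwa [H_rot]
    have h3 : 0 < H (c ^ 2) (a ^ 2) (b ^ 2) := by rwa [H_rot]
    have u1 := U_pos (by positivity) hH ρ
    have u2 := U_pos (by positivity) h2 σ
    have u3 := U_pos (by positivity) h3 τ
    unfold U at u1 u2 u3
    unfold f
    rw [mem_T_iff (Real.sqrt_nonneg _) (Real.sqrt_nonneg _) (Real.sqrt_nonneg _)]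
    rw [Real.sq_sqrt u1.le, Real.sq_sqrt u2.le, Real.sq_sqrt u3.le]
    rfl
  constructor
  · intro h x y z hx hy hz hH
    have hT : (√x, √y, √z) ∈ T := by
      rw [mem_T_iff (Real.sqrt_nonneg _) (Real.sqrt_nonneg _) (Real.sqrt_nonneg _),
        Real.sq_sqrt hx.le, Real.sq_sqrt hy.le, Real.sq_sqrt hz.le]
      exact hH
    have := (key _ _ _ hT).1 (h _ _ _ hT)
    rwa [Real.sq_sqrt hx.le, Real.sq_sqrt hy.le, Real.sq_sqrt hz.le] at this
  · intro h a b c hT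
    obtain ⟨ha, hb, hc⟩ := pos_of_mem_T hT
    exact (key a b c hT).2 (h _ _ _ (by positivity) (by positivity) (by positivity)
      ((mem_T_iff ha.le hb.le hc.le).1 hT))

/-- Relabelling the vertices cyclically. -/
lemma A_rot {ρ σ τ : ℝ} (h : (ρ, σ, τ) ∈ A) : (σ, τ, ρ) ∈ A := by
  rw [mem_A_iff] at h ⊢
  intro x y z hx hy hz hH
  have := h z x y hz hx hy (by rwa [← H_rot])
  unfold K at this ⊢
  rwa [H_rot]

/-! ### Heron's form of the cevians on the three families -/

lemma K_diag (ξ x y z : ℝ) : K ξ ξ ξ x y z = (ξ ^ 2 - ξ + 1) ^ 2 * H x y z := by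
  unfold K U H; ring

lemma K_second (ξ x y z : ℝ) :
    K (2 - ξ) ξ (-ξ) x y z = (ξ ^ 2 - ξ - 1) ^ 2 * H x y z := by
  unfold K U H; ring

lemma K_third {r : ℝ} (h0 : r ≠ 0) (h1 : 1 - r ≠ 0) (x y z : ℝ) :
    K r (1 / (1 - r)) (1 - 1 / r) x y z = (U x y z r / (r * (1 - r)) ^ 2) ^ 2 *
      ((r ^ 2 - r + 1) * ((1 + r - r ^ 2) * (1 - r - r ^ 2) * (3 * r - 1 - r ^ 2))) := by
  unfold K U H; field_simp; ring

/-! ### Degenerate triangles -/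

/-- `K` is nonnegative at degenerate triangles: these are limits of the nondegenerate ones with
squared sides `s² + ε, (s - t)² + ε, t² + ε`. -/
lemma K_boundary {ρ σ τ : ℝ} (h : (ρ, σ, τ) ∈ A) (s t : ℝ) :
    0 ≤ K ρ σ τ (s ^ 2) ((s - t) ^ 2) (t ^ 2) := by
  rw [mem_A_iff] at h
  have hc : Continuous fun ε : ℝ => K ρ σ τ (s ^ 2 + ε) ((s - t) ^ 2 + ε) (t ^ 2 + ε) := by
    unfold K U H; fun_prop
  have ht := (hc.tendsto 0).mono_left (nhdsWithin_le_nhds (s := Set.Ioi 0))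
  simp only [add_zero] at ht
  refine ge_of_tendsto ht ?_
  filter_upwards [self_mem_nhdsWithin] with ε hε
  have hε : 0 < ε := hε
  refine (h _ _ _ (by positivity) (by positivity) (by positivity) ?_).le
  have e : H (s ^ 2 + ε) ((s - t) ^ 2 + ε) (t ^ 2 + ε) =
      2 * ε * (s ^ 2 + (s - t) ^ 2 + t ^ 2) + 3 * ε ^ 2 := by unfold H; ring
  rw [e]; positivity

/-- At the degenerate triangle with `A = A_ρ` the other two cevians have equal length. -/
lemma boundary_eq {ρ σ τ : ℝ} (h : (ρ, σ, τ) ∈ A) :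
    ρ * σ - σ + ρ - ρ * τ = 0 ∨ 2 + ρ * σ - σ - ρ + ρ * τ = 0 := by
  have h1 := K_boundary h 1 ρ
  have e : K ρ σ τ (1 ^ 2) ((1 - ρ) ^ 2) (ρ ^ 2) =
      -((ρ * σ - σ + ρ - ρ * τ) * (2 + ρ * σ - σ - ρ + ρ * τ)) ^ 2 := by unfold K U H; ring
  rw [e] at h1
  exact mul_eq_zero.1 (pow_eq_zero_iff two_ne_zero |>.1 (le_antisymm (by linarith) (sq_nonneg _)))

/-- A linear form `p t + q s` vanishing at the two points `(t₁, s₁)`, `(t₂, s₂)` is zero unless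
the points are proportional. -/
lemma form_zero {p q t₁ s₁ t₂ s₂ : ℝ} (h1 : p * t₁ + q * s₁ = 0) (h2 : p * t₂ + q * s₂ = 0) :
    (p = 0 ∧ q = 0) ∨ t₁ * s₂ - t₂ * s₁ = 0 := by
  by_cases h : t₁ * s₂ - t₂ * s₁ = 0
  · exact Or.inr h
  · refine Or.inl ⟨?_, ?_⟩ <;> refine (mul_eq_zero.1 ?_).resolve_right h
    · linear_combination s₂ * h1 - s₁ * h2
    · linear_combination t₁ * h2 - t₂ * h1

/-- The zeros of `ℓ₁, ℓ₂, ℓ₃` are `(t, s) = (ρ, 1), (σ - 1, σ), (1, 1 - τ)`. The first four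
alternatives are the vanishing of one of the forms `±ℓ₁ ± ℓ₂ ± ℓ₃`; the last one says that the
three zeros coincide. -/
lemma solve_boundary {ρ σ τ : ℝ}
    (h1 : ρ * σ - σ + ρ - ρ * τ = 0 ∨ 2 + ρ * σ - σ - ρ + ρ * τ = 0)
    (h2 : σ * τ - τ + σ - σ * ρ = 0 ∨ 2 + σ * τ - τ - σ + σ * ρ = 0)
    (h3 : τ * ρ - ρ + τ - τ * σ = 0 ∨ 2 + τ * ρ - ρ - τ + τ * σ = 0) :
    (σ + τ = 0 ∧ 2 - ρ - σ = 0) ∨ (τ - σ = 0 ∧ σ - ρ = 0) ∨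
    (2 - σ - τ = 0 ∧ σ - ρ - 2 = 0) ∨ (2 + σ - τ = 0 ∧ -ρ - σ = 0) ∨
    (ρ * σ - (σ - 1) * 1 = 0 ∧ ρ * (1 - τ) - 1 * 1 = 0) := by
  -- At each zero, the two forms agreeing there up to sign vanish.
  have z1 : ((σ + τ) * ρ + (2 - ρ - σ) * 1 = 0 ∧ (2 - σ - τ) * ρ + (σ - ρ - 2) * 1 = 0) ∨
      ((τ - σ) * ρ + (σ - ρ) * 1 = 0 ∧ (2 + σ - τ) * ρ + (-ρ - σ) * 1 = 0) := by
    rcases h1 with h | h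
    · exact Or.inr ⟨by linear_combination -h, by linear_combination h⟩
    · exact Or.inl ⟨by linear_combination h, by linear_combination -h⟩
  have z2 : ((σ + τ) * (σ - 1) + (2 - ρ - σ) * σ = 0 ∧ (τ - σ) * (σ - 1) + (σ - ρ) * σ = 0) ∨
      ((2 - σ - τ) * (σ - 1) + (σ - ρ - 2) * σ = 0 ∧
        (2 + σ - τ) * (σ - 1) + (-ρ - σ) * σ = 0) := by
    rcases h2 with h | h
    · exact Or.inl ⟨by linear_combination h, by linear_combination h⟩
    · exact Or.inr ⟨by linear_combination -h, by linear_combination -h⟩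
  have z3 : ((σ + τ) * 1 + (2 - ρ - σ) * (1 - τ) = 0 ∧
        (2 + σ - τ) * 1 + (-ρ - σ) * (1 - τ) = 0) ∨
      ((τ - σ) * 1 + (σ - ρ) * (1 - τ) = 0 ∧ (2 - σ - τ) * 1 + (σ - ρ - 2) * (1 - τ) = 0) := by
    rcases h3 with h | h
    · exact Or.inr ⟨by linear_combination h, by linear_combination h⟩
    · exact Or.inl ⟨by linear_combination h, by linear_combination h⟩
  -- Transitivity of proportionality, for combinations giving the coincidence of the second and
  -- third zeros; the second zero has `σ ≠ 0` when it equals the first.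
  have t12 : ρ * σ - (σ - 1) * 1 = 0 → (σ - 1) * (1 - τ) - 1 * σ = 0 →
      ρ * (1 - τ) - 1 * 1 = 0 := by
    intro a b
    have hσ : σ ≠ 0 := by rintro rfl; norm_num at a
    refine (mul_eq_zero.1 ?_).resolve_left hσ
    linear_combination (1 - τ) * a + b
  rcases z1 with ⟨a, a'⟩ | ⟨a, a'⟩ <;> rcases z2 with ⟨b, b'⟩ | ⟨b, b'⟩ <;>
    rcases z3 with ⟨c, c'⟩ | ⟨c, c'⟩
  · rcases form_zero a b with h | e12
    · exact Or.inl h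
    rcases form_zero a c with h | e13
    · exact Or.inl h
    exact Or.inr (Or.inr (Or.inr (Or.inr ⟨e12, e13⟩)))
  · rcases form_zero a b with h | e12
    · exact Or.inl h
    rcases form_zero b' c with h | e23
    · exact Or.inr (Or.inl h)
    exact Or.inr (Or.inr (Or.inr (Or.inr ⟨e12, t12 e12 e23⟩)))
  · rcases form_zero a' b with h | e12
    · exact Or.inr (Or.inr (Or.inl h))
    rcases form_zero b' c' with h | e23
    · exact Or.inr (Or.inr (Or.inr (Or.inl h)))
    exact Or.inr (Or.inr (Or.inr (Or.inr ⟨e12, t12 e12 e23⟩)))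
  · rcases form_zero a' b with h | e12
    · exact Or.inr (Or.inr (Or.inl h))
    rcases form_zero a' c' with h | e13
    · exact Or.inr (Or.inr (Or.inl h))
    exact Or.inr (Or.inr (Or.inr (Or.inr ⟨e12, e13⟩)))
  · rcases form_zero a b' with h | e12
    · exact Or.inr (Or.inl h)
    rcases form_zero b c with h | e23
    · exact Or.inl h
    exact Or.inr (Or.inr (Or.inr (Or.inr ⟨e12, t12 e12 e23⟩)))
  · rcases form_zero a b' with h | e12
    · exact Or.inr (Or.inl h)
    rcases form_zero a c with h | e13
    · exact Or.inr (Or.inl h)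
    exact Or.inr (Or.inr (Or.inr (Or.inr ⟨e12, e13⟩)))
  · rcases form_zero a' b' with h | e12
    · exact Or.inr (Or.inr (Or.inr (Or.inl h)))
    rcases form_zero a' c' with h | e13
    · exact Or.inr (Or.inr (Or.inr (Or.inl h)))
    exact Or.inr (Or.inr (Or.inr (Or.inr ⟨e12, e13⟩)))
  · rcases form_zero a' b' with h | e12
    · exact Or.inr (Or.inr (Or.inr (Or.inl h)))
    rcases form_zero b c' with h | e23
    · exact Or.inr (Or.inr (Or.inl h))
    exact Or.inr (Or.inr (Or.inr (Or.inr ⟨e12, t12 e12 e23⟩)))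

/-! ### The golden ratio and the excluded parameters -/

lemma phi_sq : phi ^ 2 = phi + 1 := by
  have := Real.sq_sqrt (show (0 : ℝ) ≤ 5 by norm_num)
  unfold phi; linear_combination this / 4

lemma one_lt_phi : 1 < phi := by
  have : 1 < √5 := by rw [Real.lt_sqrt] <;> norm_num
  unfold phi; linarith

lemma phi_lt_two : phi < 2 := by
  nlinarith [phi_sq, one_lt_phi]

lemma phi_inv : phi⁻¹ = phi - 1 := by
  have := one_lt_phi
  rw [inv_eq_iff_eq_inv, eq_comm, inv_eq_iff_eq_inv, eq_comm]
  exact inv_eq_of_mul_eq_one_right (by linear_combination phi_sq)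

lemma golden_factor (ξ : ℝ) : ξ ^ 2 - ξ - 1 = (ξ - phi) * (ξ + phi⁻¹) := by
  rw [phi_inv]; linear_combination phi_sq

lemma second_mem {ξ : ℝ} (h1 : ξ ≠ -phi⁻¹) (h2 : ξ ≠ phi) : (2 - ξ, ξ, -ξ) ∈ A := by
  rw [mem_A_iff]
  intro x y z _ _ _ hH
  rw [K_second, golden_factor]
  have : ξ - phi ≠ 0 := sub_ne_zero.2 h2
  have : ξ + phi⁻¹ ≠ 0 := fun h => h1 (by linarith)
  positivity

lemma ne_of_second_mem {ξ : ℝ} (h : (2 - ξ, ξ, -ξ) ∈ A) : ξ ≠ -phi⁻¹ ∧ ξ ≠ phi := by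
  have h := (mem_A_iff _ _ _).1 h 1 1 1 one_pos one_pos one_pos (by norm_num [H])
  rw [K_second, golden_factor] at h
  constructor <;> rintro rfl <;> simp at h

/-- The polynomial deciding the third family, factored over `ℚ(√5)`. -/
lemma cubic_factor (r : ℝ) : (1 + r - r ^ 2) * (1 - r - r ^ 2) * (3 * r - 1 - r ^ 2) =
    -((r - phi) * (r + (phi - 1)) * ((r - (phi - 1)) * (r + phi)) *
      ((r - (phi + 1)) * (r - (2 - phi)))) := by
  have e1 : 1 + r - r ^ 2 = -((r - phi) * (r + (phi - 1))) := by linear_combination -phi_sq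
  have e2 : 1 - r - r ^ 2 = -((r - (phi - 1)) * (r + phi)) := by linear_combination -phi_sq
  have e3 : 3 * r - 1 - r ^ 2 = -((r - (phi + 1)) * (r - (2 - phi))) := by
    linear_combination -phi_sq
  rw [e1, e2, e3]; ring

lemma third_mem {ξ : ℝ} (h : ξ ∈ Set.Ioo phi (phi ^ 2)) : (ξ, 1 / (1 - ξ), 1 - 1 / ξ) ∈ A := by
  obtain ⟨h1, h2⟩ := h
  rw [phi_sq] at h2
  have hp := one_lt_phi
  have hp2 := phi_lt_two
  rw [mem_A_iff]
  intro x y z hx _ _ hH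
  have h0 : ξ ≠ 0 := by linarith
  have h1' : 1 - ξ ≠ 0 := by linarith
  rw [K_third h0 h1', cubic_factor]
  have hU := U_pos hx hH ξ
  have a1 : 0 < ξ - phi := by linarith
  have a2 : 0 < ξ + (phi - 1) := by linarith
  have a3 : 0 < ξ - (phi - 1) := by linarith
  have a4 : 0 < ξ + phi := by linarith
  have a5 : 0 < (phi + 1) - ξ := by linarith
  have a6 : 0 < ξ - (2 - phi) := by linarith
  have a7 : 0 < ξ ^ 2 - ξ + 1 := by nlinarith
  have e : -((ξ - phi) * (ξ + (phi - 1)) * ((ξ - (phi - 1)) * (ξ + phi)) *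
      ((ξ - (phi + 1)) * (ξ - (2 - phi)))) = (ξ - phi) * (ξ + (phi - 1)) *
      ((ξ - (phi - 1)) * (ξ + phi)) * (((phi + 1) - ξ) * (ξ - (2 - phi))) := by ring
  rw [e]
  positivity

/-- The product is positive only on `(-φ, -φ⁻¹)`, `(φ⁻², φ⁻¹)` and `(φ, φ²)`; note `φ⁻¹ = φ - 1`
and `φ⁻² = 2 - φ`. -/
lemma intervals {r : ℝ}
    (h : 0 < (1 + r - r ^ 2) * (1 - r - r ^ 2) * (3 * r - 1 - r ^ 2)) :
    (-phi < r ∧ r < -(phi - 1)) ∨ (2 - phi < r ∧ r < phi - 1) ∨ (phi < r ∧ r < phi + 1) := by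
  have hp := one_lt_phi
  have hp2 := phi_lt_two
  have hp3 := phi_sq
  have hp4 : 3 / 2 < phi := by nlinarith
  rw [cubic_factor] at h
  by_contra! hn
  obtain ⟨n1, n2, n3⟩ := hn
  refine absurd h (not_lt.2 (neg_nonpos.2 ?_))
  rcases le_or_gt r (-phi) with g1 | g1
  · refine mul_nonneg (mul_nonneg (mul_nonneg_of_nonpos_of_nonpos ?_ ?_)
      (mul_nonneg_of_nonpos_of_nonpos ?_ ?_)) (mul_nonneg_of_nonpos_of_nonpos ?_ ?_) <;> linarith
  have n1 := n1 g1
  rcases le_or_gt r (2 - phi) with g2 | g2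
  · refine mul_nonneg (mul_nonneg_of_nonpos_of_nonpos (mul_nonpos_of_nonpos_of_nonneg ?_ ?_)
      (mul_nonpos_of_nonpos_of_nonneg ?_ ?_)) (mul_nonneg_of_nonpos_of_nonpos ?_ ?_) <;> linarith
  have n2 := n2 g2
  rcases le_or_gt r phi with g3 | g3
  · refine mul_nonneg_of_nonpos_of_nonpos (mul_nonpos_of_nonpos_of_nonneg
      (mul_nonpos_of_nonpos_of_nonneg ?_ ?_) (mul_nonneg ?_ ?_))
      (mul_nonpos_of_nonpos_of_nonneg ?_ ?_) <;> linarith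
  have n3 := n3 g3
  refine mul_nonneg (mul_nonneg (mul_nonneg ?_ ?_) (mul_nonneg ?_ ?_)) (mul_nonneg ?_ ?_) <;>
    linarith

/-- When the zeros of `ℓ₁, ℓ₂, ℓ₃` coincide, one of `ρ, σ, τ` lies in `(φ, φ²)`. -/
lemma third_of_mem {ρ σ τ : ℝ} (h : (ρ, σ, τ) ∈ A) (h1 : ρ * σ - (σ - 1) * 1 = 0)
    (h2 : ρ * (1 - τ) - 1 * 1 = 0) :
    ∃ ξ : ℝ, ξ ∈ Set.Ioo phi (phi ^ 2) ∧
        ((ρ, σ, τ) = (1 / (1 - ξ), 1 - 1 / ξ, ξ) ∨ (ρ, σ, τ) = (ξ, 1 / (1 - ξ), 1 - 1 / ξ) ∨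
          (ρ, σ, τ) = (1 - 1 / ξ, ξ, 1 / (1 - ξ))) := by
  have hρ : ρ ≠ 0 := by rintro rfl; norm_num at h2
  have hρ1 : 1 - ρ ≠ 0 := by
    intro h0
    obtain rfl : ρ = 1 := by linarith
    norm_num at h1
  obtain rfl : σ = 1 / (1 - ρ) := by rw [eq_div_iff hρ1]; linear_combination -h1
  obtain rfl : τ = 1 - 1 / ρ := by field_simp; linear_combination -h2
  have hK := (mem_A_iff _ _ _).1 h 1 1 1 one_pos one_pos one_pos (by norm_num [H])
  rw [K_third hρ hρ1] at hK
  have hq : 0 < ρ ^ 2 - ρ + 1 := by nlinarith [sq_nonneg (ρ - 1 / 2)]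
  have hK := pos_of_mul_pos_right (pos_of_mul_pos_right hK (sq_nonneg _)) hq.le
  have hp := one_lt_phi
  have hp2 := phi_lt_two
  have hp3 := phi_sq
  rcases intervals hK with ⟨g1, g2⟩ | ⟨g1, g2⟩ | ⟨g1, g2⟩
  · have hneg : ρ < 0 := by linarith
    have e : 1 - 1 / ρ = (1 - ρ) / -ρ := by field_simp; ring
    refine ⟨1 - 1 / ρ, ⟨?_, ?_⟩, Or.inl ?_⟩
    · rw [e, lt_div_iff₀ (by linarith)]; nlinarith
    · rw [e, hp3, div_lt_iff₀ (by linarith)]; nlinarith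
    · have h3 : 1 - (1 - 1 / ρ) = 1 / ρ := by ring
      have h4 : 1 - 1 / ρ = -(1 - ρ) / ρ := by field_simp; ring
      rw [Prod.mk.injEq, Prod.mk.injEq, h3]
      refine ⟨by simp, ?_, rfl⟩
      rw [h4]; field_simp; ring
  · refine ⟨1 / (1 - ρ), ⟨?_, ?_⟩, Or.inr (Or.inr ?_)⟩
    · rw [lt_div_iff₀ (by linarith)]; nlinarith
    · rw [hp3, div_lt_iff₀ (by linarith)]; nlinarith
    · have h4 : 1 - 1 / (1 - ρ) = -ρ / (1 - ρ) := by field_simp; ring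
      rw [Prod.mk.injEq, Prod.mk.injEq, h4]
      refine ⟨by simp, rfl, ?_⟩
      field_simp; ring
  · exact ⟨ρ, ⟨g1, by rwa [hp3]⟩, Or.inr (Or.inl rfl)⟩

end Ceva

open Ceva in
theorem ceva_main_theorem :
    A = {p : ℝ × ℝ × ℝ | ∃ ξ : ℝ, p = (ξ, ξ, ξ)} ∪
      {p : ℝ × ℝ × ℝ | ∃ ξ : ℝ, ξ ≠ -phi⁻¹ ∧ ξ ≠ phi ∧
        (p = (-ξ, 2 - ξ, ξ) ∨ p = (ξ, -ξ, 2 - ξ) ∨ p = (2 - ξ, ξ, -ξ))} ∪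
      {p : ℝ × ℝ × ℝ | ∃ ξ : ℝ, ξ ∈ Set.Ioo phi (phi ^ 2) ∧
        (p = (1 / (1 - ξ), 1 - 1 / ξ, ξ) ∨ p = (ξ, 1 / (1 - ξ), 1 - 1 / ξ) ∨
          p = (1 - 1 / ξ, ξ, 1 / (1 - ξ)))} := by
  ext ⟨ρ, σ, τ⟩
  constructor
  · intro h
    have h' := A_rot h
    have h'' := A_rot h'
    rcases solve_boundary (boundary_eq h) (boundary_eq h') (boundary_eq h'') with
      ⟨a, b⟩ | ⟨a, b⟩ | ⟨a, b⟩ | ⟨a, b⟩ | ⟨a, b⟩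
    · obtain rfl : τ = -σ := by linarith
      obtain rfl : ρ = 2 - σ := by linarith
      obtain ⟨n1, n2⟩ := ne_of_second_mem h
      exact Or.inl (Or.inr ⟨σ, n1, n2, Or.inr (Or.inr rfl)⟩)
    · obtain rfl : τ = σ := by linarith
      obtain rfl : τ = ρ := by linarith
      exact Or.inl (Or.inl ⟨τ, rfl⟩)
    · obtain rfl : σ = 2 - τ := by linarith
      obtain rfl : ρ = -τ := by linarith
      obtain ⟨n1, n2⟩ := ne_of_second_mem h'
      exact Or.inl (Or.inr ⟨τ, n1, n2, Or.inl rfl⟩)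
    · obtain rfl : σ = -ρ := by linarith
      obtain rfl : τ = 2 - ρ := by linarith
      obtain ⟨n1, n2⟩ := ne_of_second_mem h''
      exact Or.inl (Or.inr ⟨ρ, n1, n2, Or.inr (Or.inl rfl)⟩)
    · exact Or.inr (third_of_mem h a b)
  · rintro ((⟨ξ, h⟩ | ⟨ξ, n1, n2, h | h | h⟩) | ⟨ξ, hξ, h | h | h⟩) <;> rw [h]
    · rw [mem_A_iff]
      intro x y z _ _ _ hH
      rw [K_diag]
      have : 0 < ξ ^ 2 - ξ + 1 := by nlinarith [sq_nonneg (ξ - 1 / 2)]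
      positivity
    · exact A_rot (A_rot (second_mem n1 n2))
    · exact A_rot (second_mem n1 n2)
    · exact second_mem n1 n2
    · exact A_rot (third_mem hξ)
    · exact third_mem hξ
    · exact A_rot (A_rot (third_mem hξ))
end

section
/- Let φ = (1+√5)/2. For every ξ ∈ ℝ with ξ ≠ −φ⁻¹ and ξ ≠ φ, the three triples (−ξ, 2−ξ, ξ), (ξ, −ξ, 2−ξ) and (2−ξ, ξ, −ξ) all belong to 𝔸; that is, for every (a,b,c) ∈ 𝒯, the triple (f(a,b,c,ξ), f(b,c,a,−ξ), f(c,a,b,2−ξ)) lies in 𝒯, and similarly for the two cyclic variants. -/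
theorem T_rotate {a b c : ℝ} (h : (a, b, c) ∈ T) : (b, c, a) ∈ T := by
  obtain ⟨h1, h2⟩ := h
  simp only [abs_lt] at h1 h2
  refine ⟨?_, ?_⟩ <;> simp only [abs_lt]
  · constructor <;> linarith
  · linarith

theorem T_heron_pos {a b c : ℝ} (h : (a, b, c) ∈ T) :
    0 < 4 * a ^ 2 * b ^ 2 - (a ^ 2 + b ^ 2 - c ^ 2) ^ 2 := by
  obtain ⟨h1, h2⟩ := h
  simp only [abs_lt] at h1 h2
  have e : 4 * a ^ 2 * b ^ 2 - (a ^ 2 + b ^ 2 - c ^ 2) ^ 2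
      = (a + b + c) * (a + b - c) * ((c + a - b) * (c - a + b)) := by ring
  rw [e]
  have : 0 < a + b + c := by linarith
  have : 0 < a + b - c := by linarith
  have : 0 < c + a - b := by linarith
  have : 0 < c - a + b := by linarith
  positivity

/-- Converse of Heron's inequality, in terms of squared side lengths. -/
theorem mem_T_of_heron {X Y Z : ℝ} (hX : 0 ≤ X)
    (h : 0 < 4 * X * Y - (X + Y - Z) ^ 2) :
    (Real.sqrt X, Real.sqrt Y, Real.sqrt Z) ∈ T := by
  -- Heron's expression is symmetric in `X, Y, Z`, so both `X * Y` and `X * Z` are positive.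
  have hXY : 0 < X * Y := by nlinarith [sq_nonneg (X + Y - Z)]
  have hXZ : 0 < X * Z := by nlinarith [sq_nonneg (X + Z - Y)]
  have hY : 0 < Y := pos_of_mul_pos_right hXY hX
  have hZ : 0 < Z := pos_of_mul_pos_right hXZ hX
  have sX := Real.sq_sqrt hX
  have sY := Real.sq_sqrt hY.le
  have sZ := Real.sq_sqrt hZ.le
  have x0 := Real.sqrt_nonneg X
  have y0 := Real.sqrt_nonneg Y
  have z0 := Real.sqrt_nonneg Z
  generalize Real.sqrt X = x at *
  generalize Real.sqrt Y = y at *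
  generalize Real.sqrt Z = z at *
  subst sX sY sZ
  have k : |x ^ 2 + y ^ 2 - z ^ 2| < 2 * x * y :=
    abs_lt_of_sq_lt_sq (by nlinarith) (by positivity)
  rw [abs_lt] at k
  refine ⟨?_, ?_⟩
  · exact abs_lt_of_sq_lt_sq (by nlinarith) z0
  · exact lt_of_pow_lt_pow_left₀ 2 (by positivity) (by nlinarith)

theorem golden_ne_zero {ξ : ℝ} (h1 : ξ ≠ -phi⁻¹) (h2 : ξ ≠ phi) :
    1 + ξ - ξ ^ 2 ≠ 0 := by
  have s5 : Real.sqrt 5 ^ 2 = 5 := Real.sq_sqrt (by norm_num)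
  have hp : 0 < phi := by unfold phi; positivity
  have hphi : phi ^ 2 = phi + 1 := by unfold phi; nlinarith
  have hinv : -phi⁻¹ = 1 - phi := by
    field_simp
    linarith
  rw [hinv] at h1
  have e : 1 + ξ - ξ ^ 2 = -((ξ - phi) * (ξ - (1 - phi))) := by linear_combination -hphi
  rw [e]
  exact neg_ne_zero.mpr (mul_ne_zero (sub_ne_zero.mpr h2) (sub_ne_zero.mpr h1))

theorem cevians_mem_T {ξ : ℝ} (hξ : 1 + ξ - ξ ^ 2 ≠ 0) {a b c : ℝ} (h : (a, b, c) ∈ T) :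
    (f a b c ξ, f b c a (-ξ), f c a b (2 - ξ)) ∈ T := by
  have hK := T_heron_pos h
  have hc : 0 < c := lt_of_le_of_lt (abs_nonneg _) h.1
  refine mem_T_of_heron ?_ ?_
  · -- `4 |p|² |u|² = 4 (p · u)² + 4 det (p, u)²` with `|p| = c`
    have e : 4 * c ^ 2 * (ξ * (ξ - 1) * a ^ 2 + ξ * b ^ 2 + (1 - ξ) * c ^ 2)
        = (2 * (1 - ξ) * c ^ 2 + ξ * (b ^ 2 + c ^ 2 - a ^ 2)) ^ 2
          + ξ ^ 2 * (4 * a ^ 2 * b ^ 2 - (a ^ 2 + b ^ 2 - c ^ 2) ^ 2) := by ring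
    refine nonneg_of_mul_nonneg_right (a := 4 * c ^ 2) ?_ (by positivity)
    rw [e]
    positivity
  · have e : 0 < (1 + ξ - ξ ^ 2) ^ 2 * (4 * a ^ 2 * b ^ 2 - (a ^ 2 + b ^ 2 - c ^ 2) ^ 2) := by
      positivity
    refine e.trans_eq ?_
    ring

theorem second_family_in_A (ξ : ℝ) (h1 : ξ ≠ -phi⁻¹) (h2 : ξ ≠ phi) :
    (-ξ, 2 - ξ, ξ) ∈ A ∧ (ξ, -ξ, 2 - ξ) ∈ A ∧ (2 - ξ, ξ, -ξ) ∈ A := by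
  have hξ := golden_ne_zero h1 h2
  refine ⟨fun a b c h => ?_, fun a b c h => ?_, fun a b c h => ?_⟩
  · exact T_rotate (cevians_mem_T hξ (T_rotate (T_rotate h)))
  · exact cevians_mem_T hξ h
  · exact T_rotate (T_rotate (cevians_mem_T hξ (T_rotate h)))
end

section
/- Let φ = (1+√5)/2 and let τ ∈ {−φ, −φ⁻¹, φ⁻², φ⁻¹, φ, φ²}. Then for every (a,b,c) ∈ 𝒯, the three cevian lengths p = f(a,b,c, 1/(1−τ)), q = f(b,c,a, 1 − 1/τ), r = f(c,a,b, τ) form a degenerate triangle: their squares satisfy p⁴ + q⁴ + r⁴ = 2(p²q² + q²r² + r²p²) (equivalently, one of p, q, r equals the sum of the other two). In particular, the triple (1/(1−τ), 1 − 1/τ, τ) does not belong to 𝔸. -/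
theorem f_sq_first (a b c τ : ℝ) (h1 : 1 - τ ≠ 0) :
    (f a b c (1 / (1 - τ))) ^ 2 = (f c a b τ) ^ 2 / (1 - τ) ^ 2 := by
  have key : 1 / (1 - τ) * (1 / (1 - τ) - 1) * a ^ 2 + 1 / (1 - τ) * b ^ 2
        + (1 - 1 / (1 - τ)) * c ^ 2
      = (τ * (τ - 1) * c ^ 2 + τ * a ^ 2 + (1 - τ) * b ^ 2) / (1 - τ) ^ 2 := by
    field_simp
    ring
  unfold f
  rw [key, Real.sqrt_div' _ (sq_nonneg _), div_pow, Real.sq_sqrt (sq_nonneg (1 - τ))]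

theorem f_sq_second (a b c τ : ℝ) (h0 : τ ≠ 0) :
    (f b c a (1 - 1 / τ)) ^ 2 = (f c a b τ) ^ 2 / τ ^ 2 := by
  have key : (1 - 1 / τ) * (1 - 1 / τ - 1) * b ^ 2 + (1 - 1 / τ) * c ^ 2
        + (1 - (1 - 1 / τ)) * a ^ 2
      = (τ * (τ - 1) * c ^ 2 + τ * a ^ 2 + (1 - τ) * b ^ 2) / τ ^ 2 := by
    field_simp
    ring
  unfold f
  rw [key, Real.sqrt_div' _ (sq_nonneg _), div_pow, Real.sq_sqrt (sq_nonneg τ)]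

/-- The six listed values are roots of three quadratics, none of which vanishes at `0` or `1`. -/
theorem quadratic_of_mem (τ : ℝ)
    (hτ : τ = -phi ∨ τ = -phi⁻¹ ∨ τ = (phi ^ 2)⁻¹ ∨ τ = phi⁻¹ ∨ τ = phi ∨
      τ = phi ^ 2) :
    τ ^ 2 + τ - 1 = 0 ∨ τ ^ 2 - τ - 1 = 0 ∨ τ ^ 2 - 3 * τ + 1 = 0 := by
  have hphi : phi ^ 2 = phi + 1 := by
    have h5 : Real.sqrt 5 ^ 2 = 5 := Real.sq_sqrt (by norm_num)
    unfold phi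
    linear_combination h5 / 4
  have hne : phi ≠ 0 := by
    intro h
    simp [h] at hphi
  have hinv : phi⁻¹ = phi - 1 := by
    field_simp
    linear_combination -hphi
  rw [← inv_pow, hinv] at hτ
  rcases hτ with rfl | rfl | rfl | rfl | rfl | rfl
  · left; linear_combination hphi
  · right; left; linear_combination hphi
  · right; right; linear_combination (phi ^ 2 - 3 * phi + 1) * hphi
  · left; linear_combination hphi
  · right; left; linear_combination hphi
  · right; right; linear_combination (phi ^ 2 + phi - 1) * hphi

theorem degenerate_of_quadratic (τ : ℝ)
    (h : τ ^ 2 + τ - 1 = 0 ∨ τ ^ 2 - τ - 1 = 0 ∨ τ ^ 2 - 3 * τ + 1 = 0) (a b c : ℝ) :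
    (f a b c (1 / (1 - τ))) ^ 4 + (f b c a (1 - 1 / τ)) ^ 4 + (f c a b τ) ^ 4 =
      2 * ((f a b c (1 / (1 - τ))) ^ 2 * (f b c a (1 - 1 / τ)) ^ 2 +
        (f b c a (1 - 1 / τ)) ^ 2 * (f c a b τ) ^ 2 +
        (f c a b τ) ^ 2 * (f a b c (1 / (1 - τ))) ^ 2) := by
  have h0 : τ ≠ 0 := by
    rintro rfl
    norm_num at h
  have h1 : 1 - τ ≠ 0 := by
    intro h1
    obtain rfl : τ = 1 := by linarith
    norm_num at h
  have hprod : (τ ^ 2 + τ - 1) * (τ ^ 2 - τ - 1) * (τ ^ 2 - 3 * τ + 1) = 0 := by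
    rcases h with h | h | h <;> simp [h]
  have hp := f_sq_first a b c τ h1
  have hq := f_sq_second a b c τ h0
  have pow4 : ∀ x : ℝ, x ^ 4 = (x ^ 2) ^ 2 := fun x => by ring
  rw [pow4, pow4 (f b c a _), pow4 (f c a b _), hp, hq]
  generalize (f c a b τ) ^ 2 = R
  field_simp
  -- Heron's factorization for the side ratio `τ : 1 - τ : τ * (1 - τ)`.
  linear_combination (R ^ 2 * (τ ^ 2 - τ + 1)) * hprod

/-- Heron's expression is positive on `T`, so the degeneracy equation fails there. -/
theorem not_degenerate_of_mem_T (p q r : ℝ) (h : (p, q, r) ∈ T) :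
    p ^ 4 + q ^ 4 + r ^ 4 ≠ 2 * (p ^ 2 * q ^ 2 + q ^ 2 * r ^ 2 + r ^ 2 * p ^ 2) := by
  obtain ⟨h1, h2⟩ := h
  simp only [abs_lt] at h1 h2
  obtain ⟨h3, h4⟩ := h1
  have hx : 0 < p + q - r := by linarith
  have hy : 0 < p + r - q := by linarith
  have hz : 0 < q + r - p := by linarith
  have hs : 0 < p + q + r := by linarith
  have hpos : 0 < (p + q + r) * (p + q - r) * (p + r - q) * (q + r - p) := by positivity
  intro he
  nlinarith [hpos, he]

theorem degenerate_exceptional_points (τ : ℝ)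
    (hτ : τ = -phi ∨ τ = -phi⁻¹ ∨ τ = (phi ^ 2)⁻¹ ∨ τ = phi⁻¹ ∨ τ = phi ∨
      τ = phi ^ 2) :
    (∀ a b c : ℝ, (a, b, c) ∈ T →
      (f a b c (1 / (1 - τ))) ^ 4 + (f b c a (1 - 1 / τ)) ^ 4 +
          (f c a b τ) ^ 4 =
        2 * ((f a b c (1 / (1 - τ))) ^ 2 * (f b c a (1 - 1 / τ)) ^ 2 +
          (f b c a (1 - 1 / τ)) ^ 2 * (f c a b τ) ^ 2 +
          (f c a b τ) ^ 2 * (f a b c (1 / (1 - τ))) ^ 2)) ∧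
    (1 / (1 - τ), 1 - 1 / τ, τ) ∉ A := by
  have h := quadratic_of_mem τ hτ
  refine ⟨fun a b c _ => degenerate_of_quadratic τ h a b c, fun hA => ?_⟩
  have hT : ((1 : ℝ), (1 : ℝ), (1 : ℝ)) ∈ T := by
    norm_num [T]
  exact not_degenerate_of_mem_T _ _ _ (hA 1 1 1 hT) (degenerate_of_quadratic τ h 1 1 1)
end

section
/- If (ρ,σ,τ) ∈ 𝔸, then (ρ,σ,τ) ∈ 𝔹; that is, for all t > 0 the three limiting inequalities hold: ||ρ(t+1) − 1| − |σt − t − 1|| ≤ |τ + t| ≤ |ρ(t+1) − 1| + |σt − t − 1|; ||ρ + t| − |σ(t+1) − 1|| ≤ |τt − t − 1| ≤ |ρ + t| + |σ(t+1) − 1|; and ||ρt − t − 1| − |σ + t|| ≤ |τ(t+1) − 1| ≤ |ρt − t − 1| + |σ + t|. -/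
/-- The solution set of the three one-parameter families of limiting
inequalities. -/
def B : Set (ℝ × ℝ × ℝ) :=
  {p | ∀ t : ℝ, 0 < t →
    (abs (|p.1 * (t + 1) - 1| - |p.2.1 * t - t - 1|) ≤ |p.2.2 + t| ∧
      |p.2.2 + t| ≤ |p.1 * (t + 1) - 1| + |p.2.1 * t - t - 1|) ∧
    (abs (|p.1 + t| - |p.2.1 * (t + 1) - 1|) ≤ |p.2.2 * t - t - 1| ∧
      |p.2.2 * t - t - 1| ≤ |p.1 + t| + |p.2.1 * (t + 1) - 1|) ∧
    (abs (|p.1 * t - t - 1| - |p.2.1 + t|) ≤ |p.2.2 * (t + 1) - 1| ∧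
      |p.2.2 * (t + 1) - 1| ≤ |p.1 * t - t - 1| + |p.2.1 + t|)}

open Filter Topology

theorem continuous_f_shift (a b c ρ : ℝ) :
    Continuous fun ε : ℝ => f (a + ε) (b + ε) (c + ε) ρ := by
  unfold f
  fun_prop

theorem weak_triangle_of_mem_A {p : ℝ × ℝ × ℝ} (hp : p ∈ A) {a b c : ℝ}
    (h1 : |a - b| ≤ c) (h2 : c ≤ a + b) :
    |f a b c p.1 - f b c a p.2.1| ≤ f c a b p.2.2 ∧
      f c a b p.2.2 ≤ f a b c p.1 + f b c a p.2.1 := by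
  have key : ∀ ε ∈ Set.Ioi (0 : ℝ),
      (f (a + ε) (b + ε) (c + ε) p.1, f (b + ε) (c + ε) (a + ε) p.2.1,
        f (c + ε) (a + ε) (b + ε) p.2.2) ∈ T := by
    intro ε hε
    have hε' : 0 < ε := hε
    refine hp _ _ _ ⟨?_, ?_⟩
    · change |a + ε - (b + ε)| < c + ε
      rw [add_sub_add_right_eq_sub]
      linarith
    · change c + ε < a + ε + (b + ε)
      linarith
  have lim : ∀ {g : ℝ → ℝ}, Continuous g → Tendsto g (𝓝[>] 0) (𝓝 (g 0)) :=
    fun hg => (hg.tendsto 0).mono_left nhdsWithin_le_nhds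
  have ca := continuous_f_shift a b c p.1
  have cb := continuous_f_shift b c a p.2.1
  have cc := continuous_f_shift c a b p.2.2
  have ev := eventually_mem_of_tendsto_nhdsWithin (tendsto_id (x := 𝓝[>] (0 : ℝ)))
  constructor
  · simpa using le_of_tendsto_of_tendsto (lim (ca.sub cb).abs) (lim cc)
      (ev.mono fun ε hε => (key ε hε).1.le)
  · simpa using le_of_tendsto_of_tendsto (lim cc) (lim (ca.add cb))
      (ev.mono fun ε hε => (key ε hε).2.le)

/-! The cevian lengths of a degenerate triangle, according to which side is the longest. -/

theorem f_first_longest (t ρ : ℝ) : f (t + 1) t 1 ρ = |ρ * (t + 1) - 1| := by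
  rw [f, ← Real.sqrt_sq_eq_abs]
  congr 1
  ring

theorem f_third_longest (t σ : ℝ) : f t 1 (t + 1) σ = |σ * t - t - 1| := by
  rw [f, ← Real.sqrt_sq_eq_abs]
  congr 1
  ring

theorem f_second_longest (t τ : ℝ) : f 1 (t + 1) t τ = |τ + t| := by
  rw [f, ← Real.sqrt_sq_eq_abs]
  congr 1
  ring

theorem A_subset_B : A ⊆ B := by
  intro p hp t ht
  refine ⟨?_, ?_, ?_⟩
  · have h := weak_triangle_of_mem_A hp (a := t + 1) (b := t) (c := 1)
      (by simp) (by linarith)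
    rwa [f_first_longest, f_second_longest, f_third_longest] at h
  · have h := weak_triangle_of_mem_A hp (a := 1) (b := t + 1) (c := t)
      (by rw [abs_le]; constructor <;> linarith) (by linarith)
    rwa [f_first_longest, f_second_longest, f_third_longest] at h
  · have h := weak_triangle_of_mem_A hp (a := t) (b := 1) (c := t + 1)
      (by rw [abs_le]; constructor <;> linarith) (by linarith)
    rwa [f_first_longest, f_second_longest, f_third_longest] at h
end

section
/- If (ρ,σ,τ) ∈ 𝔹, then |ρ(1 − τ) − 1| = |−στ + τ − 1|. -/
/-- An inequality between continuous functions on `t > 0` persists at `t = 0`. -/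
lemma le_on_Ici_of_le_on_Ioi {f g : ℝ → ℝ} (hf : Continuous f) (hg : Continuous g)
    (h : ∀ t, 0 < t → f t ≤ g t) {t : ℝ} (ht : 0 ≤ t) : f t ≤ g t := by
  have hsub : closure (Set.Ioi (0 : ℝ)) ⊆ {t | f t ≤ g t} :=
    closure_minimal h (isClosed_le hf hg)
  rw [closure_Ioi] at hsub
  exact hsub ht

theorem members_of_B_satisfy_key_equation (ρ σ τ : ℝ)
    (h : (ρ, σ, τ) ∈ B) :
    |ρ * (1 - τ) - 1| = |-σ * τ + τ - 1| := by
  have h1 : ∀ t : ℝ, 0 ≤ t →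
      abs (|ρ * (t + 1) - 1| - |σ * t - t - 1|) ≤ |τ + t| := fun t ht =>
    le_on_Ici_of_le_on_Ioi (f := fun t => abs (|ρ * (t + 1) - 1| - |σ * t - t - 1|))
      (g := fun t => |τ + t|) (by fun_prop) (by fun_prop) (fun t ht => (h t ht).1.1) ht
  have h3 : ∀ t : ℝ, 0 ≤ t →
      abs (|ρ * t - t - 1| - |σ + t|) ≤ |τ * (t + 1) - 1| := fun t ht =>
    le_on_Ici_of_le_on_Ioi (f := fun t => abs (|ρ * t - t - 1| - |σ + t|))
      (g := fun t => |τ * (t + 1) - 1|) (by fun_prop) (by fun_prop)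
      (fun t ht => (h t ht).2.2.1) ht
  rcases le_or_gt τ 0 with hτ | hτ
  · have key := h1 (-τ) (by linarith)
    rw [add_neg_cancel, abs_zero, abs_nonpos_iff, sub_eq_zero] at key
    convert key using 2 <;> ring
  rcases le_or_gt τ 1 with hτ1 | hτ1
  · have key := h3 ((1 - τ) / τ) (div_nonneg (by linarith) hτ.le)
    have hz : τ * ((1 - τ) / τ + 1) - 1 = 0 := by field_simp; ring
    rw [hz, abs_zero, abs_nonpos_iff, sub_eq_zero] at key
    have e1 : ρ * (1 - τ) - 1 = (ρ * ((1 - τ) / τ) - (1 - τ) / τ - 1) * τ := by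
      field_simp; ring
    have e2 : -σ * τ + τ - 1 = -((σ + (1 - τ) / τ) * τ) := by field_simp; ring
    rw [e1, e2, abs_neg, abs_mul, abs_mul, key]
  · have hpos : 0 < τ - 1 := by linarith
    have hne := hpos.ne'
    have key := (h (1 / (τ - 1)) (by positivity)).2.1.1
    dsimp only at key
    have hz : τ * (1 / (τ - 1)) - 1 / (τ - 1) - 1 = 0 := by field_simp; ring
    rw [hz, abs_zero, abs_nonpos_iff, sub_eq_zero] at key
    have e1 : ρ * (1 - τ) - 1 = -((ρ + 1 / (τ - 1)) * (τ - 1)) := by field_simp; ring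
    have e2 : -σ * τ + τ - 1 = -((σ * (1 / (τ - 1) + 1) - 1) * (τ - 1)) := by
      field_simp; ring
    rw [e1, e2, abs_neg, abs_neg, abs_mul, abs_mul, key]
end

section
/- The section of 𝔹 at τ = 0 is exactly the four points (0,0,0), (0,2,0), (2,0,0), (2,−2,0); and the section of 𝔹 at τ = 1 is exactly the four points (1,1,1), (−1,1,1), (1,−1,1), (3,−1,1). -/
/-- An inequality between continuous functions on `t > 0` extends to `t = 0`. -/
lemma le_at_zero {f g : ℝ → ℝ} (hf : Continuous f) (hg : Continuous g)
    (h : ∀ t : ℝ, 0 < t → f t ≤ g t) : f 0 ≤ g 0 :=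
  ContinuousWithinAt.closure_le (s := Set.Ioi 0) (by simp)
    hf.continuousWithinAt hg.continuousWithinAt h

theorem B_sections_at_zero_and_one :
    {p ∈ B | p.2.2 = 0} =
        ({(0, 0, 0), (0, 2, 0), (2, 0, 0), (2, -2, 0)} : Set (ℝ × ℝ × ℝ)) ∧
      {p ∈ B | p.2.2 = 1} =
        ({(1, 1, 1), (-1, 1, 1), (1, -1, 1), (3, -1, 1)} : Set (ℝ × ℝ × ℝ)) := by
  refine ⟨Set.Subset.antisymm ?_ ?_, Set.Subset.antisymm ?_ ?_⟩
  · rintro ⟨ρ, σ, τ⟩ ⟨h, hτ⟩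
    simp only at hτ
    subst hτ
    simp only [B, Set.mem_ofPred_eq] at h
    have h1 := le_at_zero (by fun_prop) (by fun_prop) fun t ht => (h t ht).1.1
    simp only [Set.mem_insert_iff, Set.mem_singleton_iff, Prod.mk.injEq, and_true]
    have hρ : ρ = 0 ∨ ρ = 2 := by clear h; grind
    rcases hρ with rfl | rfl
    · have h2 := le_at_zero (by fun_prop) (by fun_prop) fun t ht => (h t ht).2.1.1
      have h3 := le_at_zero (by fun_prop) (by fun_prop) fun t ht => (h t ht).2.1.2
      clear h
      grind
    · obtain ⟨h2, h3⟩ := (h 1 one_pos).2.2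
      norm_num at h2 h3
      have hσ : |σ + 1| = 1 := le_antisymm h2 h3
      have hσ' : σ = 0 ∨ σ = -2 := by
        rcases eq_or_eq_neg_of_abs_eq hσ with h4 | h4
        · left; linarith
        · right; linarith
      rcases hσ' with rfl | rfl <;> simp
  · rintro p (rfl | rfl | rfl | rfl) <;> refine ⟨fun t ht => ?_, rfl⟩ <;> dsimp only <;>
      refine ⟨⟨?_, ?_⟩, ⟨?_, ?_⟩, ?_, ?_⟩ <;> grind
  · rintro ⟨ρ, σ, τ⟩ ⟨h, hτ⟩
    simp only at hτ
    subst hτ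
    simp only [B, Set.mem_ofPred_eq] at h
    have h1 := le_at_zero (by fun_prop) (by fun_prop) fun t ht => (h t ht).2.2.1
    simp only [Set.mem_insert_iff, Set.mem_singleton_iff, Prod.mk.injEq, and_true]
    have hσ : σ = 1 ∨ σ = -1 := by clear h; grind
    rcases hσ with rfl | rfl
    · have h2 := le_at_zero (by fun_prop) (by fun_prop) fun t ht => (h t ht).2.1.2
      -- At `t = |ρ| + 1` the number `ρ + t` is positive, so the bound reads `|ρ| ≤ 1`.
      have h3 := (h (|ρ| + 1) (by positivity)).2.1.1
      have hpos : 0 < ρ + (|ρ| + 1) := by linarith [neg_abs_le ρ]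
      have e1 : 1 * (|ρ| + 1 + 1) - 1 = |ρ| + 1 := by ring
      have e2 : 1 * (|ρ| + 1) - (|ρ| + 1) - 1 = -1 := by ring
      rw [e1, e2, abs_of_pos hpos, abs_of_pos (by positivity : 0 < |ρ| + 1),
        add_sub_cancel_right, abs_neg, abs_one] at h3
      norm_num at h2
      have hρ : |ρ| = 1 := le_antisymm h3 h2
      rcases eq_or_eq_neg_of_abs_eq hρ with rfl | rfl <;> simp
    · obtain ⟨h2, h3⟩ := (h 1 one_pos).2.2
      norm_num at h2 h3
      have hρ : |ρ - 1 - 1| = 1 := le_antisymm h2 h3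
      have hρ' : ρ = 1 ∨ ρ = 3 := by
        rcases eq_or_eq_neg_of_abs_eq hρ with h4 | h4
        · right; linarith
        · left; linarith
      rcases hρ' with rfl | rfl <;> simp
  · rintro p (rfl | rfl | rfl | rfl) <;> refine ⟨fun t ht => ?_, rfl⟩ <;> dsimp only <;>
      refine ⟨⟨?_, ?_⟩, ⟨?_, ?_⟩, ?_, ?_⟩ <;> grind
end

section
/- Let τ ∈ ℝ with τ ≠ 0 and τ ≠ 1. If (ρ,σ,τ) ∈ 𝔹, then (ρ,σ) is one of the five points (τ,τ), (−τ, 2−τ), (2−τ, τ−2), (2+τ, −τ), (1/(1−τ), 1 − 1/τ). -/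
/-- The inequalities defining `B` persist at `t = 0`, by continuity. -/
lemma B_closed {ρ σ τ : ℝ} (h : (ρ, σ, τ) ∈ B) (t : ℝ) (ht : 0 ≤ t) :
    (abs (|ρ * (t + 1) - 1| - |σ * t - t - 1|) ≤ |τ + t| ∧
      |τ + t| ≤ |ρ * (t + 1) - 1| + |σ * t - t - 1|) ∧
    (abs (|ρ + t| - |σ * (t + 1) - 1|) ≤ |τ * t - t - 1| ∧
      |τ * t - t - 1| ≤ |ρ + t| + |σ * (t + 1) - 1|) ∧
    (abs (|ρ * t - t - 1| - |σ + t|) ≤ |τ * (t + 1) - 1| ∧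
      |τ * (t + 1) - 1| ≤ |ρ * t - t - 1| + |σ + t|) := by
  have hmem : t ∈ closure (Set.Ioi (0 : ℝ)) := by rwa [closure_Ioi]
  have ext : ∀ f g : ℝ → ℝ, Continuous f → Continuous g → (∀ s, 0 < s → f s ≤ g s) →
      f t ≤ g t := fun f g hf hg hfg =>
    closure_minimal (s := Set.Ioi (0 : ℝ)) (fun s hs => hfg s hs) (isClosed_le hf hg) hmem
  refine ⟨⟨?_, ?_⟩, ⟨?_, ?_⟩, ⟨?_, ?_⟩⟩
  · exact ext (fun t => abs (|ρ * (t + 1) - 1| - |σ * t - t - 1|)) (fun t => |τ + t|)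
      (by fun_prop) (by fun_prop) fun s hs => (h s hs).1.1
  · exact ext (fun t => |τ + t|) (fun t => |ρ * (t + 1) - 1| + |σ * t - t - 1|)
      (by fun_prop) (by fun_prop) fun s hs => (h s hs).1.2
  · exact ext (fun t => abs (|ρ + t| - |σ * (t + 1) - 1|)) (fun t => |τ * t - t - 1|)
      (by fun_prop) (by fun_prop) fun s hs => (h s hs).2.1.1
  · exact ext (fun t => |τ * t - t - 1|) (fun t => |ρ + t| + |σ * (t + 1) - 1|)
      (by fun_prop) (by fun_prop) fun s hs => (h s hs).2.1.2
  · exact ext (fun t => abs (|ρ * t - t - 1| - |σ + t|)) (fun t => |τ * (t + 1) - 1|)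
      (by fun_prop) (by fun_prop) fun s hs => (h s hs).2.2.1
  · exact ext (fun t => |τ * (t + 1) - 1|) (fun t => |ρ * t - t - 1| + |σ + t|)
      (by fun_prop) (by fun_prop) fun s hs => (h s hs).2.2.2

/-- Whichever of the three affine functions attached to `c` vanishes at some `t ≥ 0`, the
resulting condition is the same polynomial equation. -/
lemma sq_eq_of_zeros (a b c : ℝ)
    (hneg : ∀ t, 0 ≤ t → c + t = 0 → |a * (t + 1) - 1| = |b * t - t - 1|)
    (hmid : ∀ t, 0 ≤ t → c * (t + 1) - 1 = 0 → |a * t - t - 1| = |b + t|)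
    (hbig : ∀ t, 0 ≤ t → c * t - t - 1 = 0 → |a + t| = |b * (t + 1) - 1|) :
    (a * (1 - c) - 1) ^ 2 = (c * (1 - b) - 1) ^ 2 := by
  rcases le_or_gt c 0 with hc | hc
  · have := sq_eq_sq_iff_abs_eq_abs _ _ |>.2 (hneg (-c) (by linarith) (by ring))
    linear_combination this
  rcases le_or_gt c 1 with hc1 | hc1
  · have hc' : c ≠ 0 := hc.ne'
    have := sq_eq_sq_iff_abs_eq_abs _ _ |>.2
      (hmid ((1 - c) / c) (div_nonneg (by linarith) hc.le) (by field_simp; ring))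
    field_simp at this
    linear_combination this
  · have hc' : c - 1 ≠ 0 := by linarith
    have := sq_eq_sq_iff_abs_eq_abs _ _ |>.2
      (hbig (1 / (c - 1)) (one_div_nonneg.2 (by linarith)) (by field_simp; ring))
    field_simp at this
    linear_combination this

theorem B_section_five_points (τ : ℝ) (h0 : τ ≠ 0) (h1 : τ ≠ 1)
    (ρ σ : ℝ) (h : (ρ, σ, τ) ∈ B) :
    (ρ, σ) = (τ, τ) ∨ (ρ, σ) = (-τ, 2 - τ) ∨ (ρ, σ) = (2 - τ, τ - 2) ∨
      (ρ, σ) = (2 + τ, -τ) ∨ (ρ, σ) = (1 / (1 - τ), 1 - 1 / τ) := by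
  have tri : ∀ {x y z : ℝ}, abs (|x| - |y|) ≤ |z| → z = 0 → |x| = |y| := by
    intro x y z hxy hz
    rw [hz, abs_zero] at hxy
    exact sub_eq_zero.1 (abs_nonpos_iff.1 hxy)
  have tri' : ∀ {x y z : ℝ}, abs (|x| - |y|) ≤ |z| ∧ |z| ≤ |x| + |y| → x = 0 → |y| = |z| := by
    intro x y z hxy hx
    rw [hx, abs_zero, zero_sub, abs_neg, abs_abs, zero_add] at hxy
    exact le_antisymm hxy.1 hxy.2
  have hτ := sq_eq_of_zeros ρ σ τ
    (fun t ht => tri (B_closed h t ht).1.1)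
    (fun t ht => tri (B_closed h t ht).2.2.1)
    (fun t ht => tri (B_closed h t ht).2.1.1)
  have hρ := sq_eq_of_zeros σ τ ρ
    (fun t ht => tri' (B_closed h t ht).2.1)
    (fun t ht => tri' (B_closed h t ht).1)
    (fun t ht => tri' (B_closed h t ht).2.2)
  have h1' : 1 - τ ≠ 0 := sub_ne_zero.2 h1.symm
  -- In all four systems, a solution with `ρ (1 - τ) = 1` is the fifth point.
  have five : ρ * (1 - τ) - 1 = 0 → (ρ, σ) = (1 / (1 - τ), 1 - 1 / τ) := by
    intro hu
    have hv : τ * (1 - σ) - 1 = 0 := by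
      rw [hu] at hτ
      exact pow_eq_zero_iff two_ne_zero |>.1 (by linarith)
    refine Prod.ext ?_ ?_
    · change ρ = 1 / (1 - τ)
      field_simp
      linarith
    · change σ = 1 - 1 / τ
      field_simp
      linarith
  rcases sq_eq_sq_iff_eq_or_eq_neg.1 hτ with e | e <;>
  rcases sq_eq_sq_iff_eq_or_eq_neg.1 hρ with f | f
  · have q : (ρ * (1 - τ) - 1) * (ρ - τ) = 0 := by
      linear_combination τ * f - (1 - ρ) * e
    rcases mul_eq_zero.1 q with q | q
    · exact .inr (.inr (.inr (.inr (five q))))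
    · refine .inl (Prod.ext (sub_eq_zero.1 q) (mul_left_cancel₀ h0 ?_))
      change τ * σ = τ * τ
      linear_combination e - (1 - τ) * q
  · have q : (ρ * (1 - τ) - 1) * (ρ + τ) = 0 := by
      linear_combination τ * f - (1 - ρ) * e
    rcases mul_eq_zero.1 q with q | q
    · exact .inr (.inr (.inr (.inr (five q))))
    · refine .inr (.inl (Prod.ext (eq_neg_of_add_eq_zero_left q) (mul_left_cancel₀ h0 ?_)))
      change τ * σ = τ * (2 - τ)
      linear_combination e - (1 - τ) * q
  · have q : (ρ * (1 - τ) - 1) * (ρ - (2 - τ)) = 0 := by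
      linear_combination -τ * f - (1 - ρ) * e
    rcases mul_eq_zero.1 q with q | q
    · exact .inr (.inr (.inr (.inr (five q))))
    · refine .inr (.inr (.inl (Prod.ext (sub_eq_zero.1 q) (mul_left_cancel₀ h0 ?_))))
      change τ * σ = τ * (τ - 2)
      linear_combination -e + (1 - τ) * q
  · have q : (ρ * (1 - τ) - 1) * (ρ - (2 + τ)) = 0 := by
      linear_combination -τ * f - (1 - ρ) * e
    rcases mul_eq_zero.1 q with q | q
    · exact .inr (.inr (.inr (.inr (five q))))
    · refine .inr (.inr (.inr (.inl (Prod.ext (sub_eq_zero.1 q) (mul_left_cancel₀ h0 ?_)))))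
      change τ * σ = τ * -τ
      linear_combination -e + (1 - τ) * q
end

section
/- A triple (ρ,σ,τ) ∈ ℝ³ belongs to 𝔸 if and only if the matrix M(ρ,σ,τ) maps the cone 𝒬 into itself, i.e. M(ρ,σ,τ)·𝒬 ⊆ 𝒬. -/
/-- The open cone: the interior, in the first octant, of the cone
`x² + y² + z² = 2(xy + yz + zx)`, as a set of vectors in `Fin 3 → ℝ`. -/
def Q : Set (Fin 3 → ℝ) :=
  {v | 0 < v 0 ∧ 0 < v 1 ∧ 0 < v 2 ∧
    (v 0) ^ 2 + (v 1) ^ 2 + (v 2) ^ 2 <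
      2 * (v 0 * v 1 + v 1 * v 2 + v 2 * v 0)}

/-- The matrix `M(ρ, σ, τ)`. -/
def M (ρ σ τ : ℝ) : Matrix (Fin 3) (Fin 3) ℝ :=
  !![ρ * (ρ - 1), ρ, 1 - ρ;
     1 - σ, σ * (σ - 1), σ;
     τ, 1 - τ, τ * (τ - 1)]

/-- Triangle inequalities in terms of Heron's expression. -/
lemma mem_T_iff_heron (a b c : ℝ) :
    (a, b, c) ∈ T ↔ 0 < a ∧ 0 < b ∧ 0 < c ∧
      (a ^ 2) ^ 2 + (b ^ 2) ^ 2 + (c ^ 2) ^ 2 <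
        2 * (a ^ 2 * b ^ 2 + b ^ 2 * c ^ 2 + c ^ 2 * a ^ 2) := by
  have heron : 2 * (a ^ 2 * b ^ 2 + b ^ 2 * c ^ 2 + c ^ 2 * a ^ 2)
      - ((a ^ 2) ^ 2 + (b ^ 2) ^ 2 + (c ^ 2) ^ 2)
      = (a + b + c) * ((-a + b + c) * (a - b + c) * (a + b - c)) := by ring
  simp only [T, Set.mem_ofPred_eq, abs_lt]
  rw [← sub_pos (b := _ + _ + (c ^ 2) ^ 2), heron]
  constructor
  · rintro ⟨⟨h1, h2⟩, h3⟩
    have hp : 0 < -a + b + c := by linarith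
    have hq : 0 < a - b + c := by linarith
    have hr : 0 < a + b - c := by linarith
    have hs : 0 < a + b + c := by linarith
    exact ⟨by linarith, by linarith, by linarith, by positivity⟩
  · rintro ⟨ha, hb, hc, h⟩
    have h' : 0 < (-a + b + c) * (a - b + c) * (a + b - c) :=
      pos_of_mul_pos_right h (by positivity)
    -- A positive product of three factors leaves all positive or exactly two negative.
    rcases mul_pos_iff.1 h' with ⟨hpq, hr⟩ | ⟨hpq, hr⟩
    · rcases mul_pos_iff.1 hpq with ⟨hp, hq⟩ | ⟨hp, hq⟩
      · exact ⟨⟨by linarith, by linarith⟩, by linarith⟩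
      · linarith
    · rcases mul_neg_iff.1 hpq with ⟨hp, hq⟩ | ⟨hp, hq⟩ <;> linarith

/-- No sign condition on `x, y, z` is needed: both sides force them to be positive. -/
lemma sqrt_mem_T_iff (x y z : ℝ) : (√x, √y, √z) ∈ T ↔ ![x, y, z] ∈ Q := by
  rw [mem_T_iff_heron]
  simp only [Real.sqrt_pos, Q, Set.mem_ofPred_eq, Matrix.cons_val]
  refine and_congr_right fun hx => and_congr_right fun hy => and_congr_right fun hz => ?_
  rw [Real.sq_sqrt hx.le, Real.sq_sqrt hy.le, Real.sq_sqrt hz.le]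

/-- The squared cevian lengths are obtained from the squared side lengths by applying `M`. -/
lemma cevians_mem_T_iff (a b c ρ σ τ : ℝ) :
    (f a b c ρ, f b c a σ, f c a b τ) ∈ T ↔
      (M ρ σ τ).mulVec ![a ^ 2, b ^ 2, c ^ 2] ∈ Q := by
  rw [f, f, f, sqrt_mem_T_iff]
  have : (M ρ σ τ).mulVec ![a ^ 2, b ^ 2, c ^ 2] =
      ![ρ * (ρ - 1) * a ^ 2 + ρ * b ^ 2 + (1 - ρ) * c ^ 2,
        σ * (σ - 1) * b ^ 2 + σ * c ^ 2 + (1 - σ) * a ^ 2,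
        τ * (τ - 1) * c ^ 2 + τ * a ^ 2 + (1 - τ) * b ^ 2] := by
    ext i
    fin_cases i <;> simp [M, Matrix.mulVec, dotProduct, Fin.sum_univ_three] <;> ring
  rw [this]

theorem mem_A_iff_cone_invariant (ρ σ τ : ℝ) :
    (ρ, σ, τ) ∈ A ↔ (M ρ σ τ).mulVec '' Q ⊆ Q := by
  simp only [A, Set.mem_ofPred_eq, cevians_mem_T_iff, Set.image_subset_iff]
  constructor
  · intro h v hv
    have hv3 : ![v 0, v 1, v 2] = v := by
      ext i
      fin_cases i <;> rfl
    have key := h (√(v 0)) (√(v 1)) (√(v 2)) ((sqrt_mem_T_iff _ _ _).2 (hv3 ▸ hv))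
    obtain ⟨h0, h1, h2, -⟩ := hv
    rwa [Real.sq_sqrt h0.le, Real.sq_sqrt h1.le, Real.sq_sqrt h2.le, hv3] at key
  · intro h a b c habc
    apply h
    obtain ⟨ha, hb, hc, -⟩ := (mem_T_iff_heron a b c).1 habc
    rwa [← sqrt_mem_T_iff, Real.sqrt_sq ha.le, Real.sqrt_sq hb.le, Real.sqrt_sq hc.le]
end

section
/- For every τ ∈ ℝ, the matrix M(τ,τ,τ) satisfies M(τ,τ,τ)ᵀ · M(τ,τ,τ) = (τ² − τ + 1)² · I and det M(τ,τ,τ) = (τ² − τ + 1)³. Consequently (τ² − τ + 1)⁻¹ · M(τ,τ,τ) is an orthogonal matrix with determinant 1, i.e. a rotation of ℝ³, and it fixes the vector (1,1,1). -/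
/-!
With `s = τ ^ 2 - τ + 1 > 0`, direct expansion of `M τ τ τ` gives its Gram matrix `s ^ 2 • 1`,
its determinant `s ^ 3`, and the eigenvector equation `M (1, 1, 1) = s (1, 1, 1)`. Since `s ≠ 0`,
the claims about `s⁻¹ • M` follow from the homogeneity of these three quantities.
-/

open Matrix

theorem M_diag_is_scaled_rotation (τ : ℝ) :
    (M τ τ τ)ᵀ * (M τ τ τ) =
        ((τ ^ 2 - τ + 1) ^ 2) • (1 : Matrix (Fin 3) (Fin 3) ℝ) ∧
      (M τ τ τ).det = (τ ^ 2 - τ + 1) ^ 3 ∧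
      ((τ ^ 2 - τ + 1)⁻¹ • M τ τ τ)ᵀ * ((τ ^ 2 - τ + 1)⁻¹ • M τ τ τ) = 1 ∧
      ((τ ^ 2 - τ + 1)⁻¹ • M τ τ τ).det = 1 ∧
      ((τ ^ 2 - τ + 1)⁻¹ • M τ τ τ).mulVec ![1, 1, 1] = ![1, 1, 1] := by
  have hpos : 0 < τ ^ 2 - τ + 1 := by nlinarith [sq_nonneg (2 * τ - 1)]
  have hne : τ ^ 2 - τ + 1 ≠ 0 := hpos.ne'
  have hgram : (M τ τ τ)ᵀ * (M τ τ τ) =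
      ((τ ^ 2 - τ + 1) ^ 2) • (1 : Matrix (Fin 3) (Fin 3) ℝ) := by
    ext i j
    fin_cases i <;> fin_cases j <;>
      simp [M, Matrix.mul_apply, Fin.sum_univ_three] <;> ring
  have hdet : (M τ τ τ).det = (τ ^ 2 - τ + 1) ^ 3 := by
    simp [M, Matrix.det_fin_three]
    ring
  -- Every row of `M τ τ τ` sums to `τ ^ 2 - τ + 1`.
  have hvec : (M τ τ τ).mulVec ![1, 1, 1] = (τ ^ 2 - τ + 1) • ![1, 1, 1] := by
    ext i
    fin_cases i <;> simp [M, Matrix.mulVec, dotProduct, Fin.sum_univ_three] <;> ring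
  refine ⟨hgram, hdet, ?_, ?_, ?_⟩
  · rw [transpose_smul, Matrix.smul_mul, Matrix.mul_smul, hgram, smul_smul, smul_smul]
    have hscale : (τ ^ 2 - τ + 1)⁻¹ * (τ ^ 2 - τ + 1)⁻¹ * (τ ^ 2 - τ + 1) ^ 2 = 1 := by
      rw [← sq, ← mul_pow, inv_mul_cancel₀ hne, one_pow]
    rw [hscale, one_smul]
  · rw [det_smul, hdet, Fintype.card_fin, ← mul_pow, inv_mul_cancel₀ hne, one_pow]
  · rw [smul_mulVec, hvec, smul_smul, inv_mul_cancel₀ hne, one_smul]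
end

section
/- For every τ ∈ ℝ, the matrix M(τ,τ,τ) maps the cone 𝒬 into itself: if (x,y,z) ∈ 𝒬 then M(τ,τ,τ)·(x,y,z) ∈ 𝒬. -/
lemma coord_pos (τ x y z : ℝ) (hx : 0 < x)
    (h : x ^ 2 + y ^ 2 + z ^ 2 < 2 * (x * y + y * z + z * x)) :
    0 < τ * (τ - 1) * x + τ * y + (1 - τ) * z := by
  -- Completing the square, with everything multiplied by `4x`.
  have key : 4 * x * (τ * (τ - 1) * x + τ * y + (1 - τ) * z) =
      (2 * x * τ + (y - x - z)) ^ 2 +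
        (2 * (x * y + y * z + z * x) - (x ^ 2 + y ^ 2 + z ^ 2)) := by ring
  have hpos : 0 < 4 * x * (τ * (τ - 1) * x + τ * y + (1 - τ) * z) := by
    rw [key]
    linarith [sq_nonneg (2 * x * τ + (y - x - z))]
  exact pos_of_mul_pos_right hpos (by linarith)

theorem M_diag_preserves_cone (τ : ℝ) (v : Fin 3 → ℝ) (hv : v ∈ Q) :
    (M τ τ τ).mulVec v ∈ Q := by
  obtain ⟨hx, hy, hz, h⟩ := hv
  have e0 : (M τ τ τ).mulVec v 0 = τ * (τ - 1) * v 0 + τ * v 1 + (1 - τ) * v 2 := by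
    simp [M, Matrix.mulVec, dotProduct, Fin.sum_univ_three]
  have e1 : (M τ τ τ).mulVec v 1 = τ * (τ - 1) * v 1 + τ * v 2 + (1 - τ) * v 0 := by
    simp [M, Matrix.mulVec, dotProduct, Fin.sum_univ_three]
    ring
  have e2 : (M τ τ τ).mulVec v 2 = τ * (τ - 1) * v 2 + τ * v 0 + (1 - τ) * v 1 := by
    simp [M, Matrix.mulVec, dotProduct, Fin.sum_univ_three]
    ring
  simp only [Q, Set.mem_ofPred_eq, e0, e1, e2]
  refine ⟨coord_pos _ _ _ _ hx h, coord_pos _ _ _ _ hy (by linarith),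
    coord_pos _ _ _ _ hz (by linarith), ?_⟩
  have hs : 0 < τ ^ 2 - τ + 1 := by nlinarith [sq_nonneg (2 * τ - 1)]
  -- The difference of the two sides is `(τ² - τ + 1)² q(v)`.
  have hq := mul_pos (pow_pos hs 2) (sub_pos.mpr h)
  linarith
end

section
/- Let τ ∈ ℝ with τ ≠ 0 and τ ≠ 1, and let M = M(1/(1−τ), 1 − 1/τ, τ). Then M annihilates the two linearly independent vectors (1−τ, 0, 1) and (τ−1, τ, 0), and M·v = λ·v, where v = (τ/(τ−1), 1 − 1/τ, τ(τ−1)) and λ = (τ⁶ − 3τ⁵ + 3τ⁴ − τ³ + 3τ² − 3τ + 1)/((τ−1)²τ²). Moreover λ > 0. -/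
/-- The numerator of the eigenvalue is `1 - 3 p - p ^ 3` with `p = τ * (1 - τ) ≤ 1 / 4`. -/
lemma eigenvalue_numerator_pos (τ : ℝ) :
    0 < τ ^ 6 - 3 * τ ^ 5 + 3 * τ ^ 4 - τ ^ 3 + 3 * τ ^ 2 - 3 * τ + 1 := by
  have hp : τ * (1 - τ) ≤ 1 / 4 := by nlinarith [sq_nonneg (τ - 1 / 2)]
  have hp3 : (τ * (1 - τ)) ^ 3 ≤ (1 / 4) ^ 3 := Odd.pow_le_pow (by decide) |>.mpr hp
  linear_combination hp3 + 3 * hp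

theorem degenerate_matrix_eigenstructure (τ : ℝ) (h0 : τ ≠ 0) (h1 : τ ≠ 1) :
    (M (1 / (1 - τ)) (1 - 1 / τ) τ).mulVec ![1 - τ, 0, 1] = 0 ∧
      (M (1 / (1 - τ)) (1 - 1 / τ) τ).mulVec ![τ - 1, τ, 0] = 0 ∧
      LinearIndependent ℝ ![(![1 - τ, 0, 1] : Fin 3 → ℝ), ![τ - 1, τ, 0]] ∧
      (M (1 / (1 - τ)) (1 - 1 / τ) τ).mulVec
          ![τ / (τ - 1), 1 - 1 / τ, τ * (τ - 1)] =
        ((τ ^ 6 - 3 * τ ^ 5 + 3 * τ ^ 4 - τ ^ 3 + 3 * τ ^ 2 - 3 * τ + 1) /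
            ((τ - 1) ^ 2 * τ ^ 2)) •
          ![τ / (τ - 1), 1 - 1 / τ, τ * (τ - 1)] ∧
      0 < (τ ^ 6 - 3 * τ ^ 5 + 3 * τ ^ 4 - τ ^ 3 + 3 * τ ^ 2 - 3 * τ + 1) /
          ((τ - 1) ^ 2 * τ ^ 2) := by
  have h2 : τ - 1 ≠ 0 := sub_ne_zero.mpr h1
  have h3 : 1 - τ ≠ 0 := sub_ne_zero.mpr h1.symm
  -- The denominators `1 - τ` and `τ - 1` have to be unified before clearing them.
  have h4 : 1 / (1 - τ) = -(1 / (τ - 1)) := by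
    rw [← neg_sub τ 1, one_div_neg_eq_neg_one_div]
  refine ⟨?_, ?_, ?_, ?_, ?_⟩
  · ext i
    fin_cases i <;> simp only [h4] <;>
      simp [M, Matrix.mulVec, dotProduct, Fin.sum_univ_three] <;> field_simp <;> ring
  · ext i
    fin_cases i <;> simp only [h4] <;>
      simp [M, Matrix.mulVec, dotProduct, Fin.sum_univ_three] <;> field_simp <;> ring
  · rw [LinearIndependent.pair_iff]
    intro s t hst
    have e1 := congrFun hst 1
    have e2 := congrFun hst 2
    simp [h0] at e1 e2
    exact ⟨e2, e1⟩
  · ext i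
    fin_cases i <;> simp only [h4] <;>
      simp [M, Matrix.mulVec, dotProduct, Fin.sum_univ_three] <;> field_simp <;> ring
  · exact div_pos (eigenvalue_numerator_pos τ) (by positivity)
end

section
/- Let φ = (1+√5)/2 and let τ ∈ ℝ with τ ≠ 0 and τ ≠ 1. The matrix M(1/(1−τ), 1 − 1/τ, τ) maps the cone 𝒬 into itself if and only if τ belongs to (−φ, −φ⁻¹) ∪ (φ⁻², φ⁻¹) ∪ (φ, φ²). -/
lemma linForm_pos {v : Fin 3 → ℝ} (hv : v ∈ Q) (τ : ℝ) :
    0 < τ * v 0 + (1 - τ) * v 1 + τ * (τ - 1) * v 2 := by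
  obtain ⟨_, _, hz, hq⟩ := hv
  -- Completing the square in `τ`: `4 v₂ L(v) = (2 v₂ τ + v₀ - v₁ - v₂)² - discriminant`.
  have h : 0 < 4 * v 2 * (τ * v 0 + (1 - τ) * v 1 + τ * (τ - 1) * v 2) := by
    nlinarith [sq_nonneg (2 * v 2 * τ + v 0 - v 1 - v 2)]
  exact pos_of_mul_pos_right h (by linarith)

/-- The matrix has rank one. -/
lemma mulVec_eq (τ : ℝ) (h0 : τ ≠ 0) (h1 : τ ≠ 1) (v : Fin 3 → ℝ) :
    (M (1 / (1 - τ)) (1 - 1 / τ) τ).mulVec v =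
      (τ * v 0 + (1 - τ) * v 1 + τ * (τ - 1) * v 2) •
        ![1 / (1 - τ) ^ 2, 1 / τ ^ 2, 1] := by
  have h1' : 1 - τ ≠ 0 := sub_ne_zero.mpr h1.symm
  ext i
  fin_cases i <;> simp [M, Matrix.mulVec, dotProduct, Fin.sum_univ_three] <;> field_simp <;> ring

lemma smul_mem_Q_iff {c : ℝ} (hc : 0 < c) (w : Fin 3 → ℝ) : c • w ∈ Q ↔ w ∈ Q := by
  simp only [Q, Set.mem_ofPred_eq, Pi.smul_apply, smul_eq_mul, mul_pos_iff_of_pos_left hc]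
  have e1 : (c * w 0) ^ 2 + (c * w 1) ^ 2 + (c * w 2) ^ 2 =
      c ^ 2 * (w 0 ^ 2 + w 1 ^ 2 + w 2 ^ 2) := by ring
  have e2 : 2 * (c * w 0 * (c * w 1) + c * w 1 * (c * w 2) + c * w 2 * (c * w 0)) =
      c ^ 2 * (2 * (w 0 * w 1 + w 1 * w 2 + w 2 * w 0)) := by ring
  rw [e1, e2, mul_lt_mul_iff_right₀ (pow_pos hc 2)]

lemma direction_mem_Q_iff (τ : ℝ) (h0 : τ ≠ 0) (h1 : τ ≠ 1) :
    ![1 / (1 - τ) ^ 2, 1 / τ ^ 2, 1] ∈ Q ↔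
      (τ ^ 2 - 3 * τ + 1) * (τ ^ 2 + τ - 1) * (τ ^ 2 - τ - 1) < 0 := by
  have h1' : 1 - τ ≠ 0 := sub_ne_zero.mpr h1.symm
  have ht : 0 < τ ^ 2 := by positivity
  have hs : 0 < (1 - τ) ^ 2 := by positivity
  have hscale : (τ ^ 2 * (1 - τ) ^ 2) • ![1 / (1 - τ) ^ 2, 1 / τ ^ 2, 1] =
      ![τ ^ 2, (1 - τ) ^ 2, τ ^ 2 * (1 - τ) ^ 2] := by
    ext i
    fin_cases i <;> simp <;> field_simp
  rw [← smul_mem_Q_iff (mul_pos ht hs), hscale]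
  -- The factor `τ² - τ + 1` is `p + q - r` in Heron's formula with `p + q = 1`, `r = τ(1-τ)`.
  have hpos : 0 < τ ^ 2 - τ + 1 := by nlinarith [sq_nonneg (2 * τ - 1)]
  have heron : (τ ^ 2) ^ 2 + ((1 - τ) ^ 2) ^ 2 + (τ ^ 2 * (1 - τ) ^ 2) ^ 2 -
      2 * (τ ^ 2 * (1 - τ) ^ 2 + (1 - τ) ^ 2 * (τ ^ 2 * (1 - τ) ^ 2) +
        τ ^ 2 * (1 - τ) ^ 2 * τ ^ 2) =
      (τ ^ 2 - τ + 1) * ((τ ^ 2 - 3 * τ + 1) * (τ ^ 2 + τ - 1) * (τ ^ 2 - τ - 1)) := by ring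
  rw [← smul_neg_iff_of_pos_left hpos, smul_eq_mul, ← heron, sub_neg]
  simp only [Q, Set.mem_ofPred_eq, Matrix.cons_val]
  exact ⟨fun h => h.2.2.2, fun h => ⟨ht, hs, mul_pos ht hs, h⟩⟩

lemma image_subset_iff (τ : ℝ) (h0 : τ ≠ 0) (h1 : τ ≠ 1) :
    (M (1 / (1 - τ)) (1 - 1 / τ) τ).mulVec '' Q ⊆ Q ↔
      (τ ^ 2 - 3 * τ + 1) * (τ ^ 2 + τ - 1) * (τ ^ 2 - τ - 1) < 0 := by
  rw [← direction_mem_Q_iff τ h0 h1]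
  constructor
  · intro h
    have hone : (fun _ => 1 : Fin 3 → ℝ) ∈ Q := by norm_num [Q]
    have := h (Set.mem_image_of_mem _ hone)
    rwa [mulVec_eq τ h0 h1, smul_mem_Q_iff (linForm_pos hone τ)] at this
  · rintro h _ ⟨v, hv, rfl⟩
    rwa [mulVec_eq τ h0 h1, smul_mem_Q_iff (linForm_pos hv τ)]

lemma mem_Ioo_iff_mul_neg {a b t : ℝ} (hab : a < b) :
    t ∈ Set.Ioo a b ↔ (t - a) * (t - b) < 0 := by
  rw [mul_neg_iff, Set.mem_Ioo]
  constructor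
  · rintro ⟨h, h'⟩
    exact Or.inl ⟨by linarith, by linarith⟩
  · rintro (⟨h, h'⟩ | ⟨h, h'⟩) <;> constructor <;> linarith

lemma poly_neg_iff (τ : ℝ) :
    (τ ^ 2 - 3 * τ + 1) * (τ ^ 2 + τ - 1) * (τ ^ 2 - τ - 1) < 0 ↔
      τ ∈ Set.Ioo (-phi) (-phi⁻¹) ∪ Set.Ioo (phi ^ 2)⁻¹ phi⁻¹ ∪
        Set.Ioo phi (phi ^ 2) := by
  have h5 : Real.sqrt 5 ^ 2 = 5 := Real.sq_sqrt (by norm_num)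
  have hlo : 3 / 2 < phi := by
    have : 2 < Real.sqrt 5 := Real.lt_sqrt_of_sq_lt (by norm_num)
    unfold phi; linarith
  have hhi : phi < 2 := by
    have : Real.sqrt 5 < 3 := (Real.sqrt_lt' (by norm_num)).mpr (by norm_num)
    unfold phi; linarith
  have hsq : phi ^ 2 = phi + 1 := by unfold phi; linarith
  have hinv : phi⁻¹ = phi - 1 := inv_eq_of_mul_eq_one_right (by linarith)
  have hinv2 : (phi + 1)⁻¹ = 2 - phi := inv_eq_of_mul_eq_one_right (by linarith)
  rw [hsq, hinv, hinv2]
  generalize phi = p at *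
  -- Pair the six roots by the interval they bound.
  have hfac : (τ ^ 2 - 3 * τ + 1) * (τ ^ 2 + τ - 1) * (τ ^ 2 - τ - 1) =
      ((τ - -p) * (τ - -(p - 1))) * ((τ - (2 - p)) * (τ - (p - 1))) *
        ((τ - p) * (τ - (p + 1))) := by
    have hA : τ ^ 2 - 3 * τ + 1 = (τ - (2 - p)) * (τ - (p + 1)) := by linear_combination hsq
    have hB : τ ^ 2 + τ - 1 = (τ - -p) * (τ - (p - 1)) := by linear_combination hsq
    have hC : τ ^ 2 - τ - 1 = (τ - p) * (τ - -(p - 1)) := by linear_combination hsq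
    rw [hA, hB, hC]; ring
  rw [hfac]
  constructor
  · intro h
    by_contra hn
    simp only [Set.mem_union, not_or] at hn
    obtain ⟨⟨n1, n2⟩, n3⟩ := hn
    rw [mem_Ioo_iff_mul_neg (by linarith), not_lt] at n1 n2 n3
    exact absurd h (not_lt.mpr (mul_nonneg (mul_nonneg n1 n2) n3))
  · rintro ((h | h) | h)
    · have d2 : 0 < (τ - (2 - p)) * (τ - (p - 1)) :=
        mul_pos_of_neg_of_neg (by linarith [h.2]) (by linarith [h.2])
      have d3 : 0 < (τ - p) * (τ - (p + 1)) :=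
        mul_pos_of_neg_of_neg (by linarith [h.2]) (by linarith [h.2])
      rw [mem_Ioo_iff_mul_neg (by linarith)] at h
      exact mul_neg_of_neg_of_pos (mul_neg_of_neg_of_pos h d2) d3
    · have d1 : 0 < (τ - -p) * (τ - -(p - 1)) :=
        mul_pos (by linarith [h.1]) (by linarith [h.1])
      have d3 : 0 < (τ - p) * (τ - (p + 1)) :=
        mul_pos_of_neg_of_neg (by linarith [h.2]) (by linarith [h.2])
      rw [mem_Ioo_iff_mul_neg (by linarith [h.1, h.2])] at h
      exact mul_neg_of_neg_of_pos (mul_neg_of_pos_of_neg d1 h) d3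
    · have d1 : 0 < (τ - -p) * (τ - -(p - 1)) :=
        mul_pos (by linarith [h.1]) (by linarith [h.1])
      have d2 : 0 < (τ - (2 - p)) * (τ - (p - 1)) :=
        mul_pos (by linarith [h.1]) (by linarith [h.1])
      rw [mem_Ioo_iff_mul_neg (by linarith)] at h
      exact mul_neg_of_pos_of_neg (mul_pos d1 d2) h

theorem degenerate_matrix_maps_cone_iff (τ : ℝ) (h0 : τ ≠ 0) (h1 : τ ≠ 1) :
    (M (1 / (1 - τ)) (1 - 1 / τ) τ).mulVec '' Q ⊆ Q ↔
      τ ∈ Set.Ioo (-phi) (-phi⁻¹) ∪ Set.Ioo (phi ^ 2)⁻¹ phi⁻¹ ∪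
        Set.Ioo phi (phi ^ 2) :=
  (image_subset_iff τ h0 h1).trans (poly_neg_iff τ)
end

section
/- The set of real numbers τ satisfying ||τ| − |τ−1|| ≤ |τ² − τ| ≤ |τ| + |τ−1| is exactly the union of the three closed intervals [−φ, −φ⁻¹] ∪ [φ⁻², φ⁻¹] ∪ [φ, φ²], where φ = (1+√5)/2; explicitly, [(−1−√5)/2, (1−√5)/2] ∪ [(3−√5)/2, (−1+√5)/2] ∪ [(1+√5)/2, (3+√5)/2]. -/
theorem phi_sq : phi ^ 2 = phi + 1 := by
  have h : Real.sqrt 5 ^ 2 = 5 := Real.sq_sqrt (by norm_num)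
  unfold phi
  linarith

theorem phi_gt : 3 / 2 < phi := by
  have h : (2 : ℝ) < Real.sqrt 5 := Real.lt_sqrt_of_sq_lt (by norm_num)
  unfold phi
  linarith

theorem phi_lt : phi < 2 := by
  nlinarith [phi_sq, phi_gt]

theorem phi_inv : phi⁻¹ = phi - 1 :=
  inv_eq_of_mul_eq_one_right (by linarith [phi_sq])

theorem phi_sq_inv : (phi ^ 2)⁻¹ = 2 - phi :=
  inv_eq_of_mul_eq_one_right (by rw [phi_sq]; linarith [phi_sq])

/-- The solution set, with the endpoints written as affine expressions in `φ`. -/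
theorem inequalities_iff (τ : ℝ) :
    (abs (|τ| - |τ - 1|) ≤ |τ ^ 2 - τ| ∧ |τ ^ 2 - τ| ≤ |τ| + |τ - 1|) ↔
      ((-phi ≤ τ ∧ τ ≤ -(phi - 1)) ∨ (2 - phi ≤ τ ∧ τ ≤ phi - 1)) ∨
        (phi ≤ τ ∧ τ ≤ phi + 1) := by
  have hs := phi_sq
  have h1 := phi_gt
  have h2 := phi_lt
  have f1 : τ ^ 2 - τ - 1 = (τ - phi) * (τ + phi - 1) := by linear_combination hs
  have f2 : τ ^ 2 + τ - 1 = (τ + phi) * (τ - (phi - 1)) := by linear_combination hs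
  have f3 : τ ^ 2 - 3 * τ + 1 = (τ - (2 - phi)) * (τ - (phi + 1)) := by
    linear_combination hs
  rcases lt_or_ge τ 0 with h | h
  · rw [abs_of_neg h, abs_of_neg (by linarith : τ - 1 < 0),
      abs_of_nonneg (by nlinarith : 0 ≤ τ ^ 2 - τ),
      abs_of_nonpos (by linarith : -τ - -(τ - 1) ≤ 0)]
    constructor
    · rintro ⟨a, b⟩
      exact Or.inl (Or.inl ⟨by nlinarith, by nlinarith⟩)
    · rintro ((⟨a, b⟩ | ⟨a, b⟩) | ⟨a, b⟩)
      · exact ⟨by nlinarith, by nlinarith⟩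
      · linarith
      · linarith
  rcases le_or_gt τ 1 with h' | h'
  · rw [abs_of_nonneg h, abs_of_nonpos (by linarith : τ - 1 ≤ 0),
      abs_of_nonpos (by nlinarith : τ ^ 2 - τ ≤ 0), abs_le]
    constructor
    · rintro ⟨⟨a, c⟩, b⟩
      exact Or.inl (Or.inr ⟨by nlinarith, by nlinarith⟩)
    · rintro ((⟨a, b⟩ | ⟨a, b⟩) | ⟨a, b⟩)
      · linarith
      · exact ⟨⟨by nlinarith, by nlinarith⟩, by nlinarith⟩
      · linarith
  · rw [abs_of_nonneg h, abs_of_pos (by linarith : 0 < τ - 1),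
      abs_of_nonneg (by nlinarith : 0 ≤ τ ^ 2 - τ),
      abs_of_nonneg (by linarith : 0 ≤ τ - (τ - 1))]
    constructor
    · rintro ⟨a, b⟩
      exact Or.inr ⟨by nlinarith, by nlinarith⟩
    · rintro ((⟨a, b⟩ | ⟨a, b⟩) | ⟨a, b⟩)
      · linarith
      · linarith
      · exact ⟨by nlinarith, by nlinarith⟩

theorem key_inequality_solution_set :
    {τ : ℝ | abs (|τ| - |τ - 1|) ≤ |τ ^ 2 - τ| ∧ |τ ^ 2 - τ| ≤ |τ| + |τ - 1|} =
        Set.Icc (-phi) (-phi⁻¹) ∪ Set.Icc (phi ^ 2)⁻¹ phi⁻¹ ∪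
          Set.Icc phi (phi ^ 2) ∧
      Set.Icc (-phi) (-phi⁻¹) ∪ Set.Icc (phi ^ 2)⁻¹ phi⁻¹ ∪
          Set.Icc phi (phi ^ 2) =
        Set.Icc ((-1 - Real.sqrt 5) / 2) ((1 - Real.sqrt 5) / 2) ∪
          Set.Icc ((3 - Real.sqrt 5) / 2) ((-1 + Real.sqrt 5) / 2) ∪
          Set.Icc ((1 + Real.sqrt 5) / 2) ((3 + Real.sqrt 5) / 2) := by
  rw [phi_inv, phi_sq_inv, phi_sq]
  constructor
  · ext τ
    exact inequalities_iff τ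
  · congr 1
    · congr 1 <;> congr 1 <;> unfold phi <;> ring
    · congr 1
      unfold phi
      ring
end
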